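/- Let K₁ ∈ ℝ^{n×n} and K₂ ∈ ℝ^{m×m} be diagonal matrices with positive diagonal entries, and let (x*,λ*) ∈ ℝⁿ × ℝ≥0^m be a saddle point of the Lagrangian L over ℝⁿ × ℝ≥0^m. Define V'(x,λ) = ½(x−x*)ᵀK₁⁻¹(x−x*) + ½(λ−λ*)ᵀK₂⁻¹(λ−λ*). Then for every (x,λ) ∈ ℝⁿ × ℝ≥0^m, the Lie derivative of V' along the gain-modified primal-dual dynamics (ẋ, λ̇) = (K₁(∇f(x) − Σᵢ λᵢ ∇gᵢ(x)), K₂[g(x)]_λ^+) is nonpositive, i.e., ⟨K₁⁻¹(x−x*), K₁(∇f(x) − Σᵢ λᵢ ∇gᵢ(x))⟩ + ⟨K₂⁻¹(λ−λ*), K₂[g(x)]_λ^+⟩ ≤ 0. -/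

import Mathlib

/-!
Write `L` for the Lagrangian. It is concave in `x` and affine in `λ`, with `∂L/∂λⱼ = -gⱼ`. The
gains in the dynamics cancel against their inverses in `V'`, so the first term of the Lie derivative
is `⟨x - x*, ∇ₓL(x, λ)⟩ ≤ L(x, λ) - L(x*, λ)` by concavity. Replacing `g(x)` by its projection only
decreases the second term, which is therefore at most `(λ - λ*)ᵀ g(x) = L(x, λ*) - L(x, λ)`. The sum
is at most `L(x, λ*) - L(x*, λ)`, and this is nonpositive at a saddle point.
-/

open Set InnerProductSpace

theorem sub_le_of_concaveOn_of_hasFDerivWithinAt {E : Type*} [NormedAddCommGroup E]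
    [NormedSpace ℝ E] {s : Set E} {φ : E → ℝ} {φ' : E →L[ℝ] ℝ} {x y : E}
    (hφ : ConcaveOn ℝ s φ) (hx : x ∈ s) (hy : y ∈ s) (hφ' : HasFDerivWithinAt φ φ' s x) :
    φ y - φ x ≤ φ' (y - x) := by
  let line : ℝ →ᵃ[ℝ] E := AffineMap.lineMap x y
  have hderiv : HasDerivWithinAt (φ ∘ line) (φ' (y - x)) (line ⁻¹' s) 0 :=
    hφ'.comp_hasDerivWithinAt_of_eq 0 AffineMap.hasDerivWithinAt_lineMap (mapsTo_preimage line s)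
      (AffineMap.lineMap_apply_zero x y).symm
  have hslope : slope (φ ∘ line) 0 1 ≤ φ' (y - x) :=
    (hφ.comp_affineMap line).slope_le_of_hasDerivWithinAt
      (by simpa [line] using hx) (by simpa [line] using hy) one_pos hderiv
  simpa [slope_def_field, line] using hslope

theorem convexOn_sum {E ι : Type*} [AddCommGroup E] [Module ℝ E] {s : Set E} {t : Finset ι}
    {φ : ι → E → ℝ} (hs : Convex ℝ s) (hφ : ∀ i ∈ t, ConvexOn ℝ s (φ i)) :
    ConvexOn ℝ s (∑ i ∈ t, φ i) :=
  Finset.sum_induction φ (ConvexOn ℝ s) (fun _ _ => ConvexOn.add) (convexOn_const 0 hs) hφ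

/-- The projection `[a]_b^+` of the rate `a` of a nonnegative quantity whose current value is `b`;
negative `b`, which the notation leaves undefined, is treated like `b = 0`. -/
def projectedRate {R : Type*} [Zero R] [LinearOrder R] (a b : R) : R := if 0 < b then a else max 0 a

theorem sub_mul_projectedRate_le {R : Type*} [Ring R] [LinearOrder R] [IsOrderedRing R]
    {a b c : R} (hc : 0 ≤ c) :
    (b - c) * projectedRate a b ≤ (b - c) * a := by
  unfold projectedRate
  split_ifs with hpos
  · exact le_rfl
  · have hbc : b - c ≤ 0 := sub_nonpos.mpr ((not_lt.mp hpos).trans hc)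
    exact mul_le_mul_of_nonpos_left (le_max_right 0 a) hbc

section Lagrangian

variable {E ι : Type*} [Fintype ι]

/-- The Lagrangian `L(x, λ) = f(x) - λᵀ g(x)` of maximizing `f` subject to `g ≤ 0`. -/
def lagrangian (f : E → ℝ) (g : ι → E → ℝ) (x : E) (lam : ι → ℝ) : ℝ :=
  f x - ∑ i, lam i * g i x

theorem lagrangian_sub_lagrangian_right (f : E → ℝ) (g : ι → E → ℝ) (x : E) (lam mu : ι → ℝ) :
    lagrangian f g x mu - lagrangian f g x lam = ∑ i, (lam i - mu i) * g i x := by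
  simp only [lagrangian, sub_mul, Finset.sum_sub_distrib]
  ring

theorem sum_sub_mul_projectedRate_le (f : E → ℝ) (g : ι → E → ℝ) (x : E) (lam : ι → ℝ)
    {mu : ι → ℝ} (hmu : 0 ≤ mu) :
    ∑ i, (lam i - mu i) * projectedRate (g i x) (lam i) ≤
      lagrangian f g x mu - lagrangian f g x lam := by
  rw [lagrangian_sub_lagrangian_right]
  exact Finset.sum_le_sum fun i _ => sub_mul_projectedRate_le (hmu i)

theorem concaveOn_lagrangian [AddCommGroup E] [Module ℝ E] {s : Set E} {f : E → ℝ}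
    {g : ι → E → ℝ} {lam : ι → ℝ} (hf : ConcaveOn ℝ s f) (hg : ∀ i, ConvexOn ℝ s (g i))
    (hlam : 0 ≤ lam) : ConcaveOn ℝ s (lagrangian f g · lam) := by
  have hsum : ConvexOn ℝ s (∑ i, lam i • g i) :=
    convexOn_sum hf.1 fun i _ => (hg i).smul (hlam i)
  have hsub : (lagrangian f g · lam) = f - ∑ i, lam i • g i := by
    ext x
    simp only [lagrangian, Pi.sub_apply, Finset.sum_apply, Pi.smul_apply, smul_eq_mul]
  exact hsub ▸ hf.sub hsum

variable [NormedAddCommGroup E] [InnerProductSpace ℝ E] [CompleteSpace E] {s : Set E}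
  {f : E → ℝ} {f' : E} {g : ι → E → ℝ} {g' : ι → E} {lam : ι → ℝ} {x y : E}

theorem hasGradientWithinAt_lagrangian (hf' : HasGradientWithinAt f f' s x)
    (hg' : ∀ i, HasGradientWithinAt (g i) (g' i) s x) :
    HasGradientWithinAt (lagrangian f g · lam) (f' - ∑ i, lam i • g' i) s x := by
  rw [hasGradientWithinAt_iff_hasFDerivWithinAt, map_sub, map_sum]
  simp only [map_smul]
  exact hf'.hasFDerivWithinAt.fun_sub
    (.fun_sum fun i _ => (hg' i).hasFDerivWithinAt.const_mul (lam i))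

theorem inner_sub_gradient_lagrangian_le (hf : ConcaveOn ℝ s f) (hg : ∀ i, ConvexOn ℝ s (g i))
    (hlam : 0 ≤ lam) (hx : x ∈ s) (hy : y ∈ s) (hf' : HasGradientWithinAt f f' s x)
    (hg' : ∀ i, HasGradientWithinAt (g i) (g' i) s x) :
    inner ℝ (x - y) (f' - ∑ i, lam i • g' i) ≤ lagrangian f g x lam - lagrangian f g y lam := by
  have htangent := sub_le_of_concaveOn_of_hasFDerivWithinAt (concaveOn_lagrangian hf hg hlam) hx hy
    (hasGradientWithinAt_lagrangian hf' hg').hasFDerivWithinAt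
  rw [toDual_apply_apply, ← neg_sub x y, inner_neg_right, real_inner_comm] at htangent
  linarith

end Lagrangian

section Gain

theorem inner_symm_apply_apply_of_isSymmetric {E : Type*} [NormedAddCommGroup E]
    [InnerProductSpace ℝ E] {K : E ≃ₗ[ℝ] E} (hK : K.toLinearMap.IsSymmetric) (u v : E) :
    inner ℝ (K.symm u) (K v) = inner ℝ u v := by
  simpa using (hK (K.symm u) v).symm

variable {ι : Type*}

/-- The diagonal gain matrix with nonzero diagonal entries `k`, as a linear automorphism of
Euclidean space, so that the inverse gain is its `symm`. -/
noncomputable def diagonalGain (k : ι → ℝ) (hk : ∀ i, k i ≠ 0) :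
    EuclideanSpace ℝ ι ≃ₗ[ℝ] EuclideanSpace ℝ ι :=
  (LinearEquiv.piCongrRight fun i => LinearEquiv.smulOfNeZero ℝ ℝ (k i) (hk i)).withLpCongr 2

theorem diagonalGain_apply (k : ι → ℝ) (hk : ∀ i, k i ≠ 0) (v : EuclideanSpace ℝ ι) (i : ι) :
    diagonalGain k hk v i = k i * v i :=
  rfl

theorem diagonalGain_symm_apply (k : ι → ℝ) (hk : ∀ i, k i ≠ 0) (v : EuclideanSpace ℝ ι) (i : ι) :
    (diagonalGain k hk).symm v i = (k i)⁻¹ * v i :=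
  rfl

theorem isSymmetric_diagonalGain [Fintype ι] (k : ι → ℝ) (hk : ∀ i, k i ≠ 0) :
    (diagonalGain k hk).toLinearMap.IsSymmetric := fun u v => by
  simp only [LinearEquiv.coe_coe, PiLp.inner_apply, diagonalGain_apply, RCLike.inner_apply,
    conj_trivial]
  exact Finset.sum_congr rfl fun i _ => by ring

theorem inner_diagonalGain_symm_apply_apply [Fintype ι] (k : ι → ℝ) (hk : ∀ i, k i ≠ 0)
    (u v : EuclideanSpace ℝ ι) :
    inner ℝ ((diagonalGain k hk).symm u) (diagonalGain k hk v) =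
      ∑ i, ((k i)⁻¹ * u i) * (k i * v i) := by
  simp only [PiLp.inner_apply, diagonalGain_apply, diagonalGain_symm_apply, RCLike.inner_apply,
    conj_trivial, mul_comm]

end Gain

-- `IsSaddlePointOn` minimizes over the first argument, so the multiplier comes first there.
theorem lie_derivative_nonpos_with_gains_general {E ι : Type*} [NormedAddCommGroup E]
    [InnerProductSpace ℝ E] [CompleteSpace E] [Fintype ι] {s : Set E} {f : E → ℝ} {f' : E}
    {g : ι → E → ℝ} {g' : ι → E} {K : E ≃ₗ[ℝ] E} {k : ι → ℝ} {x xs : E} {lam ls : ι → ℝ}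
    (hf : ConcaveOn ℝ s f) (hg : ∀ i, ConvexOn ℝ s (g i))
    (hK : K.toLinearMap.IsSymmetric) (hk : ∀ i, k i ≠ 0) (hxs : xs ∈ s) (hls : 0 ≤ ls)
    (hsaddle : IsSaddlePointOn (Ici 0) s (fun mu y => lagrangian f g y mu) ls xs)
    (hx : x ∈ s) (hlam : 0 ≤ lam) (hf' : HasGradientWithinAt f f' s x)
    (hg' : ∀ i, HasGradientWithinAt (g i) (g' i) s x) :
    inner ℝ (K.symm (x - xs)) (K (f' - ∑ i, lam i • g' i)) +
      ∑ i, ((k i)⁻¹ * (lam i - ls i)) * (k i * projectedRate (g i x) (lam i)) ≤ 0 := by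
  have hprimal : inner ℝ (K.symm (x - xs)) (K (f' - ∑ i, lam i • g' i)) ≤
      lagrangian f g x lam - lagrangian f g xs lam :=
    (inner_symm_apply_apply_of_isSymmetric hK _ _).trans_le
      (inner_sub_gradient_lagrangian_le hf hg hlam hx hxs hf' hg')
  have hdual : ∑ i, ((k i)⁻¹ * (lam i - ls i)) * (k i * projectedRate (g i x) (lam i)) ≤
      lagrangian f g x ls - lagrangian f g x lam := by
    simpa only [mul_mul_mul_comm, inv_mul_cancel₀ (hk _), one_mul] using
      sum_sub_mul_projectedRate_le f g x lam hls
  have hminimax : lagrangian f g x ls ≤ lagrangian f g xs lam := hsaddle lam hlam x hx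
  linarith

/-- for diagonal positive definite gain matrices `K₁, K₂` (with diagonal
entries `k1 i > 0`, `k2 j > 0`) and a saddle point `(x*,λ*)` of the Lagrangian over
`ℝⁿ × ℝ≥0^m`, the Lie derivative of `V'(x,λ) = ½(x−x*)ᵀK₁⁻¹(x−x*) + ½(λ−λ*)ᵀK₂⁻¹(λ−λ*)`
along the gain-modified primal-dual dynamics
`(ẋ, λ̇) = (K₁(∇f(x) − Σᵢ λᵢ∇gᵢ(x)), K₂[g(x)]_λ⁺)` is nonpositive on `ℝⁿ × ℝ≥0^m`:
`⟨K₁⁻¹(x−x*), K₁(∇f(x) − Σᵢ λᵢ∇gᵢ(x))⟩ + ⟨K₂⁻¹(λ−λ*), K₂[g(x)]_λ⁺⟩ ≤ 0`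
(the inner products written out in coordinates). -/
theorem lie_derivative_nonpos_with_gains (n m : ℕ)
    (f : EuclideanSpace ℝ (Fin n) → ℝ)
    (g : Fin m → EuclideanSpace ℝ (Fin n) → ℝ)
    (hf : ContDiff ℝ 1 f) (hfconc : StrictConcaveOn ℝ Set.univ f)
    (hfgrad : LocallyLipschitz (gradient f))
    (hg : ∀ i, ContDiff ℝ 1 (g i))
    (hgconv : ∀ i, ConvexOn ℝ Set.univ (g i))
    (hggrad : ∀ i, LocallyLipschitz (gradient (g i)))
    (k1 : Fin n → ℝ) (k2 : Fin m → ℝ)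
    (hk1 : ∀ i, 0 < k1 i) (hk2 : ∀ j, 0 < k2 j)
    (xs : EuclideanSpace ℝ (Fin n)) (ls : Fin m → ℝ) (hls : ∀ i, 0 ≤ ls i)
    (hsaddle1 : ∀ x, f x - ∑ i, ls i * g i x ≤ f xs - ∑ i, ls i * g i xs)
    (hsaddle2 : ∀ lam : Fin m → ℝ, (∀ i, 0 ≤ lam i) →
      f xs - ∑ i, ls i * g i xs ≤ f xs - ∑ i, lam i * g i xs)
    (x : EuclideanSpace ℝ (Fin n)) (lam : Fin m → ℝ) (hlam : ∀ i, 0 ≤ lam i) :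
    (∑ i, ((k1 i)⁻¹ * (x i - xs i)) *
        (k1 i * (gradient f x - ∑ j, lam j • gradient (g j) x) i))
      + ∑ j, ((k2 j)⁻¹ * (lam j - ls j)) *
          (k2 j * (if 0 < lam j then g j x else max 0 (g j x))) ≤ 0 := by
  simpa only [inner_diagonalGain_symm_apply_apply, PiLp.sub_apply, projectedRate] using
    lie_derivative_nonpos_with_gains_general hfconc.concaveOn hgconv
      (isSymmetric_diagonalGain k1 fun i => (hk1 i).ne') (fun j => (hk2 j).ne') (mem_univ xs) hls
      (fun mu hmu y _ => (hsaddle1 y).trans (hsaddle2 mu hmu)) (mem_univ x) hlam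
      (hasGradientWithinAt_univ.mpr (hf.differentiable one_ne_zero x).hasGradientAt)
      fun i => hasGradientWithinAt_univ.mpr ((hg i).differentiable one_ne_zero x).hasGradientAt
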